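/- For a simple arrangement of hyperplanes in ℝˡ (hyperplanes in relative general position), the number f_k of k-dimensional faces equals Σ_{j=0}^{k} a_j · C(l−j, l−k), where a_j is the number of elements of dimension j in the intersection poset and C denotes the binomial coefficient. -/

import Mathlib

open scoped Classical

/-- The dimension of a subset of `ℝˡ`: the rank of the direction of its affine span. -/
noncomputable def setDim (l : ℕ) (F : Set (Fin l → ℝ)) : ℕ :=
  Module.finrank ℝ (affineSpan ℝ F).direction

/-- The intersection poset of a hyperplane arrangement: all nonempty intersections of
subfamilies (including `ℝˡ` itself as the empty intersection). -/
def arrFlats (l : ℕ) (A : Finset (Set (Fin l → ℝ))) : Set (Set (Fin l → ℝ)) :=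
  {Y | ∃ S : Finset (Set (Fin l → ℝ)), ↑S ⊆ (↑A : Set (Set (Fin l → ℝ))) ∧
    Y = ⋂₀ (↑S : Set (Set (Fin l → ℝ))) ∧ Y.Nonempty}

/-- The face of the arrangement `A` containing the point `x`: the connected component of
`x` in (the intersection of the hyperplanes through `x`) minus (the union of the
hyperplanes missing `x`). -/
def arrFace (l : ℕ) (A : Finset (Set (Fin l → ℝ))) (x : Fin l → ℝ) : Set (Fin l → ℝ) :=
  connectedComponentIn
    (⋂₀ {H | H ∈ A ∧ x ∈ H} \ ⋃₀ {H | H ∈ A ∧ x ∉ H}) x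

/-!
Choose an affine form for every hyperplane. A face is the set of points with a prescribed sign
pattern; if `Z` is the set of hyperplanes containing it, the face spans the flat `⋂₀ Z`.
Adding one hyperplane cuts exactly those cells of a flat which meet it, so by deletion–restriction
(Zaslavsky) the faces spanning `⋂₀ Z` are as many as the sets `T ⊇ Z` of hyperplanes with a common
point. Simplicity makes `T ↦ ⋂₀ T` injective on such sets, with `dim ⋂₀ T = l - |T|`. Hence `f_k`
counts the pairs `Z ⊆ T` with `|Z| = l - k`, and each flat `⋂₀ T` of dimension `j` has
`C(l - j, l - k)` partners `Z`.
-/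

open Finset Topology

section Counting

variable {ι : Type*} {A I Z : Finset ι} {𝒞 : Finset (Finset ι)}

lemma sum_choose_card_eq_sum_range {k l : ℕ} (hk : k ≤ l) (h𝒞 : ∀ T ∈ 𝒞, #T ≤ l) :
    ∑ T ∈ 𝒞, (#T).choose (l - k) =
      ∑ j ∈ range (k + 1), #{T ∈ 𝒞 | #T = l - j} * (l - j).choose (l - k) := by
  calc ∑ T ∈ 𝒞, (#T).choose (l - k)
      = ∑ j ∈ range (l + 1), ∑ T ∈ 𝒞 with l - #T = j, (#T).choose (l - k) :=
        (sum_fiberwise_of_maps_to (fun T _ => mem_range.2 (by omega)) _).symm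
    _ = ∑ j ∈ range (l + 1), #{T ∈ 𝒞 | #T = l - j} * (l - j).choose (l - k) :=
        sum_congr rfl fun j hj => by
          have fiber_eq : {T ∈ 𝒞 | l - #T = j} = {T ∈ 𝒞 | #T = l - j} :=
            filter_congr fun T hT => by have := h𝒞 T hT; have := mem_range.1 hj; omega
          rw [fiber_eq, sum_const_nat fun T hT => by rw [(mem_filter.1 hT).2]]
    _ = ∑ j ∈ range (k + 1), #{T ∈ 𝒞 | #T = l - j} * (l - j).choose (l - k) := by
        refine (sum_subset (range_subset_range.2 (by omega)) fun j hjl hjk => ?_).symm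
        rw [mem_range] at hjl hjk
        rw [Nat.choose_eq_zero_of_lt (by omega), mul_zero]

variable [DecidableEq ι]

lemma card_filter_powerset_insert {i : ι} (hi : i ∉ I) (p : Finset ι → Prop) :
    #{T ∈ (insert i I).powerset | p T} =
      #{T ∈ I.powerset | p T} + #{T ∈ I.powerset | p (insert i T)} := by
  simp only [card_filter, sum_powerset_insert hi]

lemma card_filter_powerset_sdiff_union (hZ : Z ⊆ A) (p : Finset ι → Prop) :
    #{T ∈ (A \ Z).powerset | p (Z ∪ T)} = #{T ∈ A.powerset | p T ∧ Z ⊆ T} := by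
  have supersets_eq : {T ∈ A.powerset | p T ∧ Z ⊆ T} =
      {T ∈ (A \ Z).powerset | p (Z ∪ T)}.image (Z ∪ ·) := by
    rw [← filter_image (p := p), ← Icc_eq_image_powerset hZ]
    ext T
    simp only [mem_filter, mem_powerset, mem_Icc]
    tauto
  have union_injOn : Set.InjOn (Z ∪ ·) (SetLike.coe {T ∈ (A \ Z).powerset | p (Z ∪ T)}) := by
    intro S hS T hT (hST : Z ∪ S = Z ∪ T)
    have disjoint_of_mem {T : Finset ι} (hT : T ∈ {T ∈ (A \ Z).powerset | p (Z ∪ T)}) :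
        Disjoint Z T :=
      disjoint_sdiff.mono_right (mem_powerset.1 (mem_filter.1 hT).1)
    rw [← union_sdiff_cancel_left (disjoint_of_mem hS), hST,
      union_sdiff_cancel_left (disjoint_of_mem hT)]
  rw [supersets_eq, card_image_of_injOn union_injOn]

lemma sum_powersetCard_card_supersets (h𝒞 : 𝒞 ⊆ A.powerset) (m : ℕ) :
    ∑ Z ∈ A.powersetCard m, #{T ∈ 𝒞 | Z ⊆ T} = ∑ T ∈ 𝒞, (#T).choose m := by
  calc ∑ Z ∈ A.powersetCard m, #{T ∈ 𝒞 | Z ⊆ T}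
      = ∑ T ∈ 𝒞, #{Z ∈ A.powersetCard m | Z ⊆ T} := by
        simp only [card_filter]
        exact sum_comm
    _ = ∑ T ∈ 𝒞, (#T).choose m := sum_congr rfl fun T hT => by
        rw [← card_powersetCard]
        congr 1
        ext Z
        have hTA := mem_powerset.1 (h𝒞 hT)
        simp only [mem_filter, mem_powersetCard]
        exact ⟨fun h => ⟨h.2, h.1.2⟩, fun h => ⟨⟨h.1.trans hTA, h.2⟩, h.1⟩⟩

end Counting

section Cells

variable {V ι : Type*} [AddCommGroup V] [Module ℝ V] {g : ι → V →ᵃ[ℝ] ℝ}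
  {A I Z P N : Finset ι} {i : ι} {x q : V} {m : ℕ}

/-- The flat on which all the affine forms `g i`, `i ∈ Z`, vanish; it may be empty. -/
def commonZeros (g : ι → V →ᵃ[ℝ] ℝ) (Z : Finset ι) : AffineSubspace ℝ V where
  carrier := {x | ∀ i ∈ Z, g i x = 0}
  smul_vsub_vadd_mem' c p₁ p₂ p₃ h₁ h₂ h₃ i hi := by
    rw [AffineMap.map_vadd, map_smul, AffineMap.linearMap_vsub, h₁ i hi, h₂ i hi, h₃ i hi]
    simp

/-- The cell of points at which the forms indexed by `Z`, `P` and `N` are zero, positive and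
negative respectively. -/
def signCell (g : ι → V →ᵃ[ℝ] ℝ) (Z P N : Finset ι) : Set V :=
  {x | x ∈ commonZeros g Z ∧ (∀ i ∈ P, 0 < g i x) ∧ ∀ i ∈ N, g i x < 0}

lemma mem_commonZeros : x ∈ commonZeros g Z ↔ ∀ i ∈ Z, g i x = 0 :=
  Iff.rfl

lemma convex_signCell : Convex ℝ (signCell g Z P N) := by
  have signCell_eq : signCell g Z P N = (commonZeros g Z : Set V) ∩
      ((⋂ i ∈ P, g i ⁻¹' Set.Ioi 0) ∩ ⋂ i ∈ N, g i ⁻¹' Set.Iio 0) := by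
    ext x; simp [signCell]
  rw [signCell_eq]
  exact (commonZeros g Z).convex.inter <|
    (convex_iInter₂ fun i _ => (convex_Ioi 0).affine_preimage (g i)).inter <|
      convex_iInter₂ fun i _ => (convex_Iio 0).affine_preimage (g i)

lemma eventually_lineMap_mem_signCell (hx : x ∈ signCell g Z P N) (hq : q ∈ commonZeros g Z) :
    ∀ᶠ t in 𝓝 (0 : ℝ), AffineMap.lineMap x q t ∈ signCell g Z P N := by
  have tendsto_apply (i : ι) :
      Filter.Tendsto (fun t : ℝ => g i (AffineMap.lineMap x q t)) (𝓝 0) (𝓝 (g i x)) :=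
    ((g i).comp (AffineMap.lineMap x q)).continuous_of_finiteDimensional.tendsto' 0 _ (by simp)
  obtain ⟨hxZ, hxP, hxN⟩ := hx
  refine (Filter.Eventually.of_forall fun t => AffineMap.lineMap_mem t hxZ hq).and (.and ?_ ?_)
  · exact (Filter.eventually_all_finset P).2 fun i hi =>
      (tendsto_apply i).eventually_const_lt (hxP i hi)
  · exact (Filter.eventually_all_finset N).2 fun i hi =>
      (tendsto_apply i).eventually_lt_const (hxN i hi)

lemma affineSpan_signCell (hne : (signCell g Z P N).Nonempty) :
    affineSpan ℝ (signCell g Z P N) = commonZeros g Z := by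
  refine le_antisymm (affineSpan_le.2 fun x hx => hx.1) fun q hq => ?_
  obtain ⟨x, hx⟩ := hne
  obtain ⟨t, hmem, ht⟩ := ((eventually_lineMap_mem_signCell hx hq).filter_mono
    nhdsWithin_le_nhds |>.and (self_mem_nhdsWithin (s := {0}ᶜ))).exists
  have q_eq : AffineMap.lineMap x (AffineMap.lineMap x q t : V) t⁻¹ = q := by
    simp [AffineMap.lineMap_apply, smul_smul, inv_mul_cancel₀ (Set.mem_compl_singleton_iff.1 ht)]
  exact q_eq ▸ AffineMap.lineMap_mem _ (subset_affineSpan ℝ _ hx) (subset_affineSpan ℝ _ hmem)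

lemma eventually_exists_mem_signCell_apply_eq (hx : x ∈ signCell g Z P N) (hix : g i x = 0)
    (hq : q ∈ commonZeros g Z) (hiq : g i q ≠ 0) :
    ∀ᶠ c in 𝓝 (0 : ℝ), ∃ y ∈ signCell g Z P N, g i y = c := by
  have tendsto_div : Filter.Tendsto (fun c : ℝ => c / g i q) (𝓝 0) (𝓝 0) :=
    (continuous_id.div_const _).tendsto' 0 0 (zero_div _)
  filter_upwards [tendsto_div.eventually (eventually_lineMap_mem_signCell hx hq)] with c hc
  refine ⟨_, hc, ?_⟩
  rw [AffineMap.apply_lineMap, hix]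
  simp [AffineMap.lineMap_apply, hiq]

/-- The cell of the arrangement of the forms `g i`, `i ∈ A`, containing `x`: the points at which
they have the same signs as at `x`. -/
def cellAt (g : ι → V →ᵃ[ℝ] ℝ) (A : Finset ι) (x : V) : Set V :=
  {y | ∀ i ∈ A, SignType.sign (g i y) = SignType.sign (g i x)}

lemma mem_cellAt_self : x ∈ cellAt g A x :=
  fun _ _ => rfl

lemma convex_cellAt : Convex ℝ (cellAt g A x) := by
  have cellAt_eq : cellAt g A x =
      ⋂ i ∈ A, g i ⁻¹' (SignType.sign ⁻¹' {SignType.sign (g i x)}) := by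
    ext y; simp [cellAt]
  rw [cellAt_eq]
  refine convex_iInter₂ fun i _ => Convex.affine_preimage (g i) (Set.OrdConnected.convex ?_)
  exact Set.ordConnected_singleton.preimage_mono SignType.sign.monotone

lemma sign_eq_sign_iff {α : Type*} [Zero α] [LinearOrder α] {a b : α} :
    SignType.sign a = SignType.sign b ↔ (a = 0 ↔ b = 0) ∧ (0 < a ↔ 0 < b) := by
  rcases lt_trichotomy a 0 with ha | ha | ha <;> rcases lt_trichotomy b 0 with hb | hb | hb <;>
    simp [ha, hb, ne_of_lt, ne_of_gt, not_lt_of_gt]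

lemma connectedComponentIn_eq_cellAt [TopologicalSpace V] [IsTopologicalAddGroup V]
    [ContinuousSMul ℝ V] (hg : ∀ i ∈ A, Continuous (g i)) (x : V) :
    connectedComponentIn {y | ∀ i ∈ A, g i y = 0 ↔ g i x = 0} x = cellAt g A x := by
  have hx : x ∈ {y | ∀ i ∈ A, g i y = 0 ↔ g i x = 0} := fun i _ => Iff.rfl
  apply Set.Subset.antisymm
  · intro y hy i hi
    have support_iff : ∀ z ∈ connectedComponentIn {y | ∀ i ∈ A, g i y = 0 ↔ g i x = 0} x,
        g i z = 0 ↔ g i x = 0 := fun z hz => connectedComponentIn_subset _ _ hz i hi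
    by_cases hix : g i x = 0
    · rw [hix, (support_iff y hy).2 hix]
    · refine isPreconnected_connectedComponentIn.constant
        (f := fun z => SignType.sign (g i z)) (fun z hz => ?_) hy (mem_connectedComponentIn hx)
      exact ((continuousAt_sign_of_ne_zero (mt (support_iff z hz).1 hix)).comp
        (hg i hi).continuousAt).continuousWithinAt
  · refine IsPreconnected.subset_connectedComponentIn ?_ mem_cellAt_self fun y hy i hi => ?_
    · exact convex_cellAt.isPreconnected
    · exact (sign_eq_sign_iff.1 (hy i hi)).1

variable [DecidableEq ι]

/-- No form of the family vanishes identically on a nonempty flat cut out by other forms of the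
family. -/
def GeneralPosition (g : ι → V →ᵃ[ℝ] ℝ) (A : Finset ι) : Prop :=
  ∀ Z ⊆ A, ∀ i ∈ A, i ∉ Z → (commonZeros g (insert i Z) : Set V).Nonempty →
    ∃ q ∈ commonZeros g Z, g i q ≠ 0

lemma GeneralPosition.mono (hA : GeneralPosition g A) (hI : I ⊆ A) : GeneralPosition g I :=
  fun Z hZ i hi => hA Z (hZ.trans hI) i (hI hi)

lemma mem_commonZeros_insert :
    x ∈ commonZeros g (insert i Z) ↔ g i x = 0 ∧ x ∈ commonZeros g Z :=
  forall_mem_insert i Z _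

lemma mem_signCell_insert_zero :
    x ∈ signCell g (insert i Z) P N ↔ x ∈ signCell g Z P N ∧ g i x = 0 := by
  rw [signCell, signCell, Set.mem_ofPred_eq, Set.mem_ofPred_eq, mem_commonZeros_insert]
  tauto

lemma mem_signCell_insert_pos :
    x ∈ signCell g Z (insert i P) N ↔ x ∈ signCell g Z P N ∧ 0 < g i x := by
  rw [signCell, signCell, Set.mem_ofPred_eq, Set.mem_ofPred_eq, forall_mem_insert]
  tauto

lemma mem_signCell_insert_neg :
    x ∈ signCell g Z P (insert i N) ↔ x ∈ signCell g Z P N ∧ g i x < 0 := by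
  rw [signCell, signCell, Set.mem_ofPred_eq, Set.mem_ofPred_eq, forall_mem_insert]
  tauto

lemma nonempty_signCell_insert_pos_and_neg (hcut : (signCell g (insert i Z) P N).Nonempty)
    (hi : ∃ q ∈ commonZeros g Z, g i q ≠ 0) :
    (signCell g Z (insert i P) N).Nonempty ∧ (signCell g Z P (insert i N)).Nonempty := by
  obtain ⟨x, hx⟩ := hcut
  obtain ⟨hxcell, hix⟩ := mem_signCell_insert_zero.1 hx
  obtain ⟨q, hq, hiq⟩ := hi
  have near := eventually_exists_mem_signCell_apply_eq hxcell hix hq hiq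
  obtain ⟨_, ⟨y, hy, rfl⟩, hpos⟩ :=
    ((near.filter_mono nhdsWithin_le_nhds).and (self_mem_nhdsWithin (s := Set.Ioi 0))).exists
  obtain ⟨_, ⟨z, hz, rfl⟩, hneg⟩ :=
    ((near.filter_mono nhdsWithin_le_nhds).and (self_mem_nhdsWithin (s := Set.Iio 0))).exists
  exact ⟨⟨y, mem_signCell_insert_pos.2 ⟨hy, hpos⟩⟩, ⟨z, mem_signCell_insert_neg.2 ⟨hz, hneg⟩⟩⟩

lemma nonempty_signCell_insert_zero (hpos : (signCell g Z (insert i P) N).Nonempty)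
    (hneg : (signCell g Z P (insert i N)).Nonempty) :
    (signCell g (insert i Z) P N).Nonempty := by
  obtain ⟨x, hx⟩ := hneg
  obtain ⟨y, hy⟩ := hpos
  obtain ⟨hxcell, hix⟩ := mem_signCell_insert_neg.1 hx
  obtain ⟨hycell, hiy⟩ := mem_signCell_insert_pos.1 hy
  obtain ⟨z, hz, hiz⟩ := (convex_signCell.affine_image (g i)).ordConnected.out
    (Set.mem_image_of_mem _ hxcell) (Set.mem_image_of_mem _ hycell) ⟨hix.le, hiy.le⟩
  exact ⟨z, mem_signCell_insert_zero.2 ⟨hz, hiz⟩⟩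

lemma nonempty_signCell_iff_pos_or_neg_or_zero :
    (signCell g Z P N).Nonempty ↔ (signCell g Z (insert i P) N).Nonempty ∨
      (signCell g Z P (insert i N)).Nonempty ∨ (signCell g (insert i Z) P N).Nonempty := by
  simp only [Set.Nonempty, mem_signCell_insert_pos, mem_signCell_insert_neg,
    mem_signCell_insert_zero, ← exists_or, ← and_or_left]
  refine exists_congr fun x => (and_iff_left ?_).symm
  rcases lt_trichotomy (g i x) 0 with h | h | h <;> simp [h]

lemma nonempty_signCell_insert_zero_iff (hA : GeneralPosition g A) (hZ : Z ⊆ A) (hi : i ∈ A)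
    (hiZ : i ∉ Z) :
    (signCell g (insert i Z) P N).Nonempty ↔
      (signCell g Z (insert i P) N).Nonempty ∧ (signCell g Z P (insert i N)).Nonempty :=
  ⟨fun hcut => nonempty_signCell_insert_pos_and_neg hcut
      (hA Z hZ i hi hiZ (hcut.mono fun _ hx => hx.1)),
    fun h => nonempty_signCell_insert_zero h.1 h.2⟩

lemma nonempty_signCell_iff (hA : GeneralPosition g A) (hZ : Z ⊆ A) (hi : i ∈ A) (hiZ : i ∉ Z) :
    (signCell g Z P N).Nonempty ↔
      (signCell g Z (insert i P) N).Nonempty ∨ (signCell g Z P (insert i N)).Nonempty := by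
  rw [nonempty_signCell_iff_pos_or_neg_or_zero (i := i),
    nonempty_signCell_insert_zero_iff hA hZ hi hiZ]
  tauto

lemma card_nonempty_signCell_insert (hA : GeneralPosition g (Z ∪ insert i I)) (hi : i ∉ I)
    (hiZ : i ∉ Z) :
    #{P ∈ (insert i I).powerset | (signCell g Z P (insert i I \ P)).Nonempty} =
      #{P ∈ I.powerset | (signCell g Z P (I \ P)).Nonempty} +
        #{P ∈ I.powerset | (signCell g (insert i Z) P (I \ P)).Nonempty} := by
  have hZA : Z ⊆ Z ∪ insert i I := subset_union_left
  have hiA : i ∈ Z ∪ insert i I := mem_union_right _ (mem_insert_self i I)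
  have pos_eq : {P ∈ I.powerset |
        (signCell g Z (insert i P) (insert i I \ insert i P)).Nonempty} =
      {P ∈ I.powerset | (signCell g Z (insert i P) (I \ P)).Nonempty} :=
    filter_congr fun P _ => by rw [insert_sdiff_insert, sdiff_insert_of_notMem hi]
  have neg_eq : {P ∈ I.powerset | (signCell g Z P (insert i I \ P)).Nonempty} =
      {P ∈ I.powerset | (signCell g Z P (insert i (I \ P))).Nonempty} :=
    filter_congr fun P hP => by
      rw [insert_sdiff_of_notMem _ fun h => hi (mem_powerset.1 hP h)]
  have whole_eq := filter_congr fun P (_ : P ∈ I.powerset) =>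
    nonempty_signCell_iff (P := P) (N := I \ P) hA hZA hiA hiZ
  have cut_eq := filter_congr fun P (_ : P ∈ I.powerset) =>
    nonempty_signCell_insert_zero_iff (P := P) (N := I \ P) hA hZA hiA hiZ
  rw [card_filter_powerset_insert hi, pos_eq, neg_eq, whole_eq, cut_eq, filter_or, filter_and,
    card_union_add_card_inter, add_comm]

theorem card_nonempty_signCell (hdisj : Disjoint Z I) (hgen : GeneralPosition g (Z ∪ I)) :
    #{P ∈ I.powerset | (signCell g Z P (I \ P)).Nonempty} =
      #{T ∈ I.powerset | (commonZeros g (Z ∪ T) : Set V).Nonempty} := by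
  induction I using Finset.induction_on generalizing Z with
  | empty => simp [filter_singleton, signCell, Set.Nonempty]
  | insert i I hi ih =>
    obtain ⟨hiZ, hdisjI⟩ := disjoint_insert_right.1 hdisj
    have delete := ih hdisjI (hgen.mono (union_subset_union_right (subset_insert i I)))
    have restrict := ih (disjoint_insert_left.2 ⟨hi, hdisjI⟩)
      (by rwa [insert_union, ← union_insert])
    rw [card_nonempty_signCell_insert hgen hi hiZ, card_filter_powerset_insert hi, delete,
      restrict]
    simp only [insert_union, union_insert]

lemma mem_signCell_sdiff_iff (hZ : Z ⊆ A) (hP : P ⊆ A \ Z) :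
    x ∈ signCell g Z P ((A \ Z) \ P) ↔
      {i ∈ A | g i x = 0} = Z ∧ {i ∈ A | 0 < g i x} = P := by
  constructor
  · rintro ⟨hxZ, hxP, hxN⟩
    have hzero : ∀ i ∈ A, g i x = 0 ↔ i ∈ Z := by
      grind [mem_commonZeros]
    have hpos : ∀ i ∈ A, 0 < g i x ↔ i ∈ P := by
      grind
    rw [filter_congr hzero, filter_congr hpos, filter_mem_eq_inter, filter_mem_eq_inter,
      inter_eq_right.2 hZ, inter_eq_right.2 (hP.trans sdiff_subset)]
    exact ⟨rfl, rfl⟩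
  · rintro ⟨rfl, rfl⟩
    refine ⟨fun i hi => (mem_filter.1 hi).2, fun i hi => (mem_filter.1 hi).2, fun i hi => ?_⟩
    simp only [mem_sdiff, mem_filter, not_and] at hi
    exact (not_lt.1 (hi.2 hi.1.1)).lt_of_ne (hi.1.2 hi.1.1)

lemma filter_pos_subset_sdiff_filter_zero :
    {i ∈ A | 0 < g i x} ⊆ A \ {i ∈ A | g i x = 0} := by
  rw [← filter_not]
  exact monotone_filter_right A fun i _ hi => hi.ne'

lemma cellAt_eq_signCell (g : ι → V →ᵃ[ℝ] ℝ) (A : Finset ι) (x : V) :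
    cellAt g A x = signCell g {i ∈ A | g i x = 0} {i ∈ A | 0 < g i x}
      ((A \ {i ∈ A | g i x = 0}) \ {i ∈ A | 0 < g i x}) := by
  ext y
  rw [mem_signCell_sdiff_iff (filter_subset _ _) filter_pos_subset_sdiff_filter_zero]
  simp only [cellAt, Set.mem_ofPred_eq, sign_eq_sign_iff, filter_inj', ← forall_and]

lemma cellAt_eq_signCell_of_mem (hZ : Z ⊆ A) (hP : P ⊆ A \ Z)
    (hx : x ∈ signCell g Z P ((A \ Z) \ P)) :
    cellAt g A x = signCell g Z P ((A \ Z) \ P) := by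
  obtain ⟨rfl, rfl⟩ := (mem_signCell_sdiff_iff hZ hP).1 hx
  exact cellAt_eq_signCell g A x

/-- The sign patterns `(Z, P)` of the nonempty cells of the arrangement on which exactly `m` forms
vanish: `Z` is the set of vanishing forms and `P` the set of positive ones. -/
noncomputable def cellPatterns (g : ι → V →ᵃ[ℝ] ℝ) (A : Finset ι) (m : ℕ) :
    Finset ((_ : Finset ι) × Finset ι) :=
  (A.powersetCard m).sigma fun Z =>
    {P ∈ (A \ Z).powerset | (signCell g Z P ((A \ Z) \ P)).Nonempty}

lemma mem_cellPatterns :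
    ⟨Z, P⟩ ∈ cellPatterns g A m ↔ (Z ⊆ A ∧ #Z = m) ∧
      P ⊆ A \ Z ∧ (signCell g Z P ((A \ Z) \ P)).Nonempty := by
  rw [cellPatterns, mem_sigma, mem_powersetCard, mem_filter, mem_powerset]

lemma injOn_signCell_cellPatterns :
    Set.InjOn (fun d : (_ : Finset ι) × Finset ι => signCell g d.1 d.2 ((A \ d.1) \ d.2))
      (cellPatterns g A m) := by
  rintro ⟨Z, P⟩ hd ⟨Z', P'⟩ hd' hcell
  obtain ⟨⟨hZ, -⟩, hP, x, hx⟩ := mem_cellPatterns.1 hd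
  obtain ⟨⟨hZ', -⟩, hP', -⟩ := mem_cellPatterns.1 hd'
  have hx' : x ∈ signCell g Z' P' ((A \ Z') \ P') := hcell.subset hx
  obtain ⟨rfl, rfl⟩ := (mem_signCell_sdiff_iff hZ hP).1 hx
  obtain ⟨rfl, rfl⟩ := (mem_signCell_sdiff_iff hZ' hP').1 hx'
  rfl

end Cells

section Equations

variable {V : Type*} {A Z T : Finset (Set V)}

/-- The subarrangements of `A` whose hyperplanes have a common point. -/
noncomputable def centralSubarrangements (A : Finset (Set V)) : Finset (Finset (Set V)) :=
  {T ∈ A.powerset | (⋂₀ (T : Set (Set V))).Nonempty}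

lemma mem_centralSubarrangements :
    T ∈ centralSubarrangements A ↔ T ⊆ A ∧ (⋂₀ (T : Set (Set V))).Nonempty := by
  rw [centralSubarrangements, mem_filter, mem_powerset]

variable [AddCommGroup V] [Module ℝ V] {g : Set V → V →ᵃ[ℝ] ℝ}

/-- The form `g H` is an equation of `H`, for every hyperplane `H` of the arrangement `A`. -/
def AreEquations (g : Set V → V →ᵃ[ℝ] ℝ) (A : Finset (Set V)) : Prop :=
  ∀ H ∈ A, ∀ x, g H x = 0 ↔ x ∈ H

lemma exists_areEquations
    (hA : ∀ H ∈ A, ∃ f : V →ₗ[ℝ] ℝ, ∃ c : ℝ, H = {x | f x = c}) :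
    ∃ g : Set V → V →ᵃ[ℝ] ℝ, AreEquations g A := by
  choose! f c hfc using hA
  refine ⟨fun H => (f H).toAffineMap - AffineMap.const ℝ _ (c H), fun H hH x => ?_⟩
  conv_rhs => rw [hfc H hH]
  simp [sub_eq_zero]

lemma AreEquations.coe_commonZeros (hg : AreEquations g A) (hZ : Z ⊆ A) :
    (commonZeros g Z : Set V) = ⋂₀ (Z : Set (Set V)) := by
  ext x
  rw [SetLike.mem_coe, mem_commonZeros, Set.mem_sInter]
  exact forall₂_congr fun H hH => hg H (hZ hH) x

end Equations

section Arrangement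

variable {l k : ℕ} {A Z P N : Finset (Set (Fin l → ℝ))}
  {g : Set (Fin l → ℝ) → (Fin l → ℝ) →ᵃ[ℝ] ℝ}

/-- Relative general position: the hyperplanes in any `S ⊆ A` with a common point meet in
codimension `#S`. -/
def IsSimpleArrangement (l : ℕ) (A : Finset (Set (Fin l → ℝ))) : Prop :=
  ∀ S : Finset (Set (Fin l → ℝ)), ↑S ⊆ (↑A : Set (Set (Fin l → ℝ))) →
    (⋂₀ (↑S : Set (Set (Fin l → ℝ)))).Nonempty →
      #S ≤ l ∧ setDim l (⋂₀ (↑S : Set (Set (Fin l → ℝ)))) = l - #S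

lemma AreEquations.setDim_signCell (hg : AreEquations g A) (hZ : Z ⊆ A)
    (hne : (signCell g Z P N).Nonempty) :
    setDim l (signCell g Z P N) = setDim l (⋂₀ (Z : Set (Set (Fin l → ℝ)))) := by
  rw [setDim, setDim, affineSpan_signCell hne, ← hg.coe_commonZeros hZ,
    AffineSubspace.affineSpan_coe]

lemma AreEquations.arrFace_eq_cellAt (hg : AreEquations g A) (x : Fin l → ℝ) :
    arrFace l A x = cellAt g A x := by
  have stratum_eq : ⋂₀ {H | H ∈ A ∧ x ∈ H} \ ⋃₀ {H | H ∈ A ∧ x ∉ H} =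
      {y | ∀ H ∈ A, g H y = 0 ↔ g H x = 0} := by
    ext y
    have hy : (∀ H ∈ A, g H y = 0 ↔ g H x = 0) ↔ ∀ H ∈ A, y ∈ H ↔ x ∈ H :=
      forall₂_congr fun H hH => by rw [hg H hH, hg H hH]
    simp only [Set.mem_sdiff, Set.mem_sInter, Set.mem_sUnion, Set.mem_ofPred_eq, hy]
    grind
  rw [arrFace, stratum_eq]
  exact connectedComponentIn_eq_cellAt
    (fun H _ => (g H).continuous_of_finiteDimensional) x

lemma IsSimpleArrangement.card_le (hA : IsSimpleArrangement l A) :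
    ∀ T ∈ centralSubarrangements A, #T ≤ l := fun T hT =>
  have hT := mem_centralSubarrangements.1 hT
  (hA T (coe_subset.2 hT.1) hT.2).1

lemma IsSimpleArrangement.setDim_sInter (hA : IsSimpleArrangement l A)
    {T : Finset (Set (Fin l → ℝ))} (hT : T ∈ centralSubarrangements A) :
    setDim l (⋂₀ (T : Set (Set (Fin l → ℝ)))) = l - #T :=
  have hT := mem_centralSubarrangements.1 hT
  (hA T (coe_subset.2 hT.1) hT.2).2

lemma IsSimpleArrangement.eq_of_subset_of_sInter_eq (hA : IsSimpleArrangement l A)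
    {S T : Finset (Set (Fin l → ℝ))} (hT : T ∈ centralSubarrangements A) (hST : S ⊆ T)
    (h : ⋂₀ (S : Set (Set (Fin l → ℝ))) = ⋂₀ (T : Set (Set (Fin l → ℝ)))) : S = T := by
  have hTA := mem_centralSubarrangements.1 hT
  have hS : S ∈ centralSubarrangements A :=
    mem_centralSubarrangements.2 ⟨hST.trans hTA.1, h ▸ hTA.2⟩
  have dim_eq : l - #S = l - #T := by rw [← hA.setDim_sInter hS, ← hA.setDim_sInter hT, h]
  have := hA.card_le S hS
  have := hA.card_le T hT
  exact eq_of_subset_of_card_le hST (by omega)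

lemma IsSimpleArrangement.injOn_sInter (hA : IsSimpleArrangement l A) :
    Set.InjOn (fun T : Finset (Set (Fin l → ℝ)) => ⋂₀ (T : Set (Set (Fin l → ℝ))))
      (centralSubarrangements A) := by
  intro S hS T hT (hST : ⋂₀ (S : Set (Set (Fin l → ℝ))) = ⋂₀ (T : Set (Set (Fin l → ℝ))))
  obtain ⟨hSA, hSne⟩ := mem_centralSubarrangements.1 hS
  obtain ⟨hTA, -⟩ := mem_centralSubarrangements.1 hT
  have sInter_union : ⋂₀ ((S ∪ T : Finset _) : Set (Set (Fin l → ℝ))) =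
      ⋂₀ (S : Set (Set (Fin l → ℝ))) := by
    rw [coe_union, Set.sInter_union, ← hST, Set.inter_self]
  have union_mem : S ∪ T ∈ centralSubarrangements A :=
    mem_centralSubarrangements.2 ⟨union_subset hSA hTA, sInter_union ▸ hSne⟩
  exact (hA.eq_of_subset_of_sInter_eq union_mem subset_union_left sInter_union.symm).trans
    (hA.eq_of_subset_of_sInter_eq union_mem subset_union_right (by rw [sInter_union, hST])).symm

lemma IsSimpleArrangement.generalPosition (hA : IsSimpleArrangement l A)
    (hg : AreEquations g A) : GeneralPosition g A := by
  intro Z hZ H hH hHZ hne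
  by_contra! hvanish
  have insert_subset : insert H Z ⊆ A := insert_subset hH hZ
  have insert_mem : insert H Z ∈ centralSubarrangements A :=
    mem_centralSubarrangements.2 ⟨insert_subset, hg.coe_commonZeros insert_subset ▸ hne⟩
  have flat_eq : commonZeros g Z = commonZeros g (insert H Z) := by
    ext x
    rw [mem_commonZeros_insert]
    exact ⟨fun hx => ⟨hvanish x hx, hx⟩, And.right⟩
  have Z_eq := hA.eq_of_subset_of_sInter_eq insert_mem (subset_insert H Z)
    (by rw [← hg.coe_commonZeros hZ, ← hg.coe_commonZeros insert_subset, flat_eq])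
  exact hHZ (Z_eq ▸ mem_insert_self H Z)

lemma IsSimpleArrangement.card_flats (hA : IsSimpleArrangement l A) {j : ℕ} (hj : j ≤ l) :
    Nat.card {Y | Y ∈ arrFlats l A ∧ setDim l Y = j} =
      #{T ∈ centralSubarrangements A | #T = l - j} := by
  have flats_eq : {Y | Y ∈ arrFlats l A ∧ setDim l Y = j} =
      (fun T : Finset (Set (Fin l → ℝ)) => ⋂₀ (T : Set (Set (Fin l → ℝ)))) ''
        SetLike.coe {T ∈ centralSubarrangements A | #T = l - j} := by
    ext Y
    constructor
    · rintro ⟨⟨T, hTA, rfl, hne⟩, hdim⟩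
      have hT : T ∈ centralSubarrangements A :=
        mem_centralSubarrangements.2 ⟨coe_subset.1 hTA, hne⟩
      have := hA.card_le T hT
      rw [hA.setDim_sInter hT] at hdim
      exact ⟨T, mem_filter.2 ⟨hT, by omega⟩, rfl⟩
    · rintro ⟨T, hT, rfl⟩
      obtain ⟨hT, hcard⟩ := mem_filter.1 hT
      obtain ⟨hTA, hne⟩ := mem_centralSubarrangements.1 hT
      refine ⟨⟨T, coe_subset.2 hTA, rfl, hne⟩, ?_⟩
      rw [hA.setDim_sInter hT, hcard, Nat.sub_sub_self hj]
  rw [flats_eq, Nat.card_coe_set_eq,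
    (hA.injOn_sInter.mono (coe_subset.2 (filter_subset _ _))).ncard_image, Set.ncard_coe_finset]

lemma IsSimpleArrangement.setDim_signCell (hA : IsSimpleArrangement l A) (hg : AreEquations g A)
    (hZ : Z ⊆ A) (hne : (signCell g Z P N).Nonempty) :
    #Z ≤ l ∧ setDim l (signCell g Z P N) = l - #Z := by
  have central : (⋂₀ (Z : Set (Set (Fin l → ℝ)))).Nonempty :=
    hg.coe_commonZeros hZ ▸ hne.mono fun _ hx => hx.1
  rw [hg.setDim_signCell hZ hne]
  exact hA Z (coe_subset.2 hZ) central

lemma IsSimpleArrangement.faces_eq_image (hA : IsSimpleArrangement l A) (hg : AreEquations g A)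
    (hk : k ≤ l) :
    {F | F ∈ Set.range (arrFace l A) ∧ setDim l F = k} =
      (fun d : (_ : Finset (Set (Fin l → ℝ))) × Finset (Set (Fin l → ℝ)) =>
        signCell g d.1 d.2 ((A \ d.1) \ d.2)) '' (cellPatterns g A (l - k)) := by
  ext F
  constructor
  · rintro ⟨⟨x, rfl⟩, hdim⟩
    have hZ : {H ∈ A | g H x = 0} ⊆ A := filter_subset _ _
    have face_eq := (hg.arrFace_eq_cellAt x).trans (cellAt_eq_signCell g A x)
    have hne : (arrFace l A x).Nonempty := ⟨x, hg.arrFace_eq_cellAt x ▸ mem_cellAt_self⟩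
    rw [face_eq] at hdim hne
    obtain ⟨hcard, hdim'⟩ := hA.setDim_signCell hg hZ hne
    refine ⟨⟨{H ∈ A | g H x = 0}, {H ∈ A | 0 < g H x}⟩, mem_cellPatterns.2
      ⟨⟨hZ, by omega⟩, filter_pos_subset_sdiff_filter_zero, hne⟩, face_eq.symm⟩
  · rintro ⟨⟨Z, P⟩, hd, rfl⟩
    obtain ⟨⟨hZ, hcard⟩, hP, hne⟩ := mem_cellPatterns.1 hd
    obtain ⟨x, hx⟩ := id hne
    refine ⟨⟨x, (hg.arrFace_eq_cellAt x).trans (cellAt_eq_signCell_of_mem hZ hP hx)⟩, ?_⟩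
    rw [(hA.setDim_signCell hg hZ hne).2, hcard, Nat.sub_sub_self hk]

lemma IsSimpleArrangement.card_faces (hA : IsSimpleArrangement l A) (hg : AreEquations g A)
    (hk : k ≤ l) :
    Nat.card {F | F ∈ Set.range (arrFace l A) ∧ setDim l F = k} =
      ∑ Z ∈ A.powersetCard (l - k),
        #{P ∈ (A \ Z).powerset | (signCell g Z P ((A \ Z) \ P)).Nonempty} := by
  rw [hA.faces_eq_image hg hk, Nat.card_coe_set_eq, injOn_signCell_cellPatterns.ncard_image,
    Set.ncard_coe_finset, cellPatterns, card_sigma]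

lemma IsSimpleArrangement.card_nonempty_signCell (hA : IsSimpleArrangement l A)
    (hg : AreEquations g A) (hZ : Z ⊆ A) :
    #{P ∈ (A \ Z).powerset | (signCell g Z P ((A \ Z) \ P)).Nonempty} =
      #{T ∈ centralSubarrangements A | Z ⊆ T} := by
  have hgen : GeneralPosition g (Z ∪ (A \ Z)) := by
    rw [union_sdiff_of_subset hZ]
    exact hA.generalPosition hg
  rw [_root_.card_nonempty_signCell disjoint_sdiff hgen,
    card_filter_powerset_sdiff_union hZ fun T => (commonZeros g T : Set (Fin l → ℝ)).Nonempty,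
    ← filter_filter, centralSubarrangements]
  congr 2
  exact filter_congr fun T hT => by rw [hg.coe_commonZeros (mem_powerset.1 hT)]

end Arrangement

open Finset in
/-- For a simple arrangement of hyperplanes in `ℝˡ` (hyperplanes in relative
general position), the number `f_k` of `k`-dimensional faces equals
`∑_{j=0}^{k} a_j · C(l-j, l-k)`, where `a_j` is the number of `j`-dimensional elements of
the intersection poset. -/
theorem face_count_of_simple_hyperplane_arrangement
    (l : ℕ) (A : Finset (Set (Fin l → ℝ)))
    (hhyp : ∀ H ∈ A, ∃ f : (Fin l → ℝ) →ₗ[ℝ] ℝ, f ≠ 0 ∧ ∃ c : ℝ, H = {x | f x = c})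
    (hsimple : ∀ S : Finset (Set (Fin l → ℝ)), ↑S ⊆ (↑A : Set (Set (Fin l → ℝ))) →
      (⋂₀ (↑S : Set (Set (Fin l → ℝ)))).Nonempty →
      S.card ≤ l ∧ setDim l (⋂₀ (↑S : Set (Set (Fin l → ℝ)))) = l - S.card)
    (k : ℕ) (hk : k ≤ l) :
    Nat.card {F : Set (Fin l → ℝ) | F ∈ Set.range (arrFace l A) ∧ setDim l F = k} =
      ∑ j ∈ Finset.range (k + 1),
        Nat.card {Y | Y ∈ arrFlats l A ∧ setDim l Y = j} *
          Nat.choose (l - j) (l - k) := by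
  obtain ⟨g, hg⟩ := exists_areEquations fun H hH => (hhyp H hH).imp fun _ hf => hf.2
  have hA : IsSimpleArrangement l A := hsimple
  calc Nat.card {F : Set (Fin l → ℝ) | F ∈ Set.range (arrFace l A) ∧ setDim l F = k}
      = ∑ Z ∈ A.powersetCard (l - k),
          #{P ∈ (A \ Z).powerset | (signCell g Z P ((A \ Z) \ P)).Nonempty} :=
        hA.card_faces hg hk
    _ = ∑ Z ∈ A.powersetCard (l - k), #{T ∈ centralSubarrangements A | Z ⊆ T} :=
        sum_congr rfl fun Z hZ => hA.card_nonempty_signCell hg (mem_powersetCard.1 hZ).1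
    _ = ∑ T ∈ centralSubarrangements A, (#T).choose (l - k) :=
        sum_powersetCard_card_supersets (filter_subset _ _) (l - k)
    _ = ∑ j ∈ range (k + 1),
          #{T ∈ centralSubarrangements A | #T = l - j} * (l - j).choose (l - k) :=
        sum_choose_card_eq_sum_range hk hA.card_le
    _ = _ := sum_congr rfl fun j hj => by
        rw [hA.card_flats ((Nat.lt_succ_iff.1 (mem_range.1 hj)).trans hk)]
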